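/- Let (w₀, w₁, w₂) be a triple of quantum shape parameters. Then the operator ℒ = Ψ_w(−A₀A₁ ⊗ A₁^{−1}) ∘ Υ satisfies ℒ ∘ (A₂ ⊗ I) = (I⊗I − q²w₂^{−1}(A₂ ⊗ A₁)) ∘ (I ⊗ w₁^{−1}A₀) ∘ ℒ in End(ℂ^N ⊗ ℂ^N), where I = id_{ℂ^N}. -/

import Mathlib

open Finset Kronecker

/-- `A₀ e_k = q^{2k} e_k` on `ℂ^N` (basis indexed by `ZMod N`). -/
noncomputable def A0 (N : ℕ) (q : ℂ) : Matrix (ZMod N) (ZMod N) ℂ :=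
  Matrix.diagonal fun k => q ^ (2 * k.val)

/-- `A₁ e_k = e_{k+1}`. -/
noncomputable def A1 (N : ℕ) : Matrix (ZMod N) (ZMod N) ℂ :=
  fun j k => if j = k + 1 then 1 else 0

/-- `A₂ e_k = q^{1−2k} e_{k−1}`. -/
noncomputable def A2 (N : ℕ) (q : ℂ) : Matrix (ZMod N) (ZMod N) ℂ :=
  fun j k => if j = k - 1 then q ^ ((1 : ℤ) - 2 * (k.val : ℤ)) else 0

/-- The operator `Ψ_w(U)` (with the scalar normalization `h(w₀)` omitted). -/
noncomputable def Psi (N : ℕ) (q w₀ w₂ : ℂ) {A : Type*} [Ring A] [Algebra ℂ A] (U : A) : A :=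
  ∑ i ∈ Finset.range N,
    (∏ j ∈ Finset.range i, (-q⁻¹ * w₂) / (1 - w₀⁻¹ * q ^ (2 * (j + 1)))) • U ^ i

/-- `Υ := (1/N) Σ_{i,j=0}^{N−1} q^{−2ij−j} A₀^i ⊗ (A₁A₀)^{−j}` on `ℂ^N ⊗ ℂ^N`. -/
noncomputable def Ups (N : ℕ) [NeZero N] (q : ℂ) :
    Matrix (ZMod N × ZMod N) (ZMod N × ZMod N) ℂ :=
  (N : ℂ)⁻¹ • ∑ i ∈ Finset.range N, ∑ j ∈ Finset.range N,
    (q ^ (-(2 * (i : ℤ) * (j : ℤ) + (j : ℤ)))) • ((A0 N q ^ i) ⊗ₖ ((A1 N * A0 N q)⁻¹ ^ j))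

/-- `ℒ := Ψ_w(−A₀A₁ ⊗ A₁⁻¹) ∘ Υ`, the transposed basic matrix dilogarithm (up to the
scalar normalization `h(w₀)`). -/
noncomputable def Ldil (N : ℕ) [NeZero N] (q w₀ w₂ : ℂ) :
    Matrix (ZMod N × ZMod N) (ZMod N × ZMod N) ℂ :=
  Psi N q w₀ w₂ (-((A0 N q * A1 N) ⊗ₖ (A1 N)⁻¹)) * Ups N q

/-!
Write `U = -A₀A₁ ⊗ A₁⁻¹`, `Y = A₂ ⊗ A₁` and `K = I ⊗ A₀`. The inner sums of `Υ` are, up to scalars,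
the spectral projectors of `A₁A₀`, so `Υ` carries `A₂ ⊗ I` to `q Y K`. As `Y = -q U⁻¹`, it commutes
with `Ψ(U)`, while `K Ψ(U) = Ψ(q⁻² U) K` because `K U = q⁻² U K`. The relation is then the
`q`-difference equation `Ψ(U) = w₀ (1 + w₂ q⁻³ U) Ψ(q⁻² U)`. It holds because the sum `Ψ(U)` is
cyclic: the next term, of index `N`, would have coefficient `-1`, and `U ^ N = -1`.
-/

section QCommutation

variable {R A : Type*}

theorem semiconjBy_pow_left_smul [CommSemiring R] [Semiring A] [Algebra R A] {a x : A} {c : R}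
    (h : SemiconjBy a x (c • x)) (n : ℕ) : SemiconjBy (a ^ n) x (c ^ n • x) := by
  induction n with
  | zero => simp
  | succ n ih =>
    rw [pow_succ, pow_succ', mul_smul]
    exact (ih.smul_right c).mul_left h

theorem mul_pow_of_semiconjBy_smul [CommSemiring R] [Semiring A] [Algebra R A] {x y : A} {c : R}
    (h : SemiconjBy y x (c • x)) (n : ℕ) : (x * y) ^ n = c ^ n.choose 2 • (x ^ n * y ^ n) := by
  induction n with
  | zero => simp
  | succ n ih =>
    have move_left : y ^ n * x = c ^ n • (x * y ^ n) := by
      rw [(semiconjBy_pow_left_smul h n).eq, smul_mul_assoc]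
    calc (x * y) ^ (n + 1) = c ^ n.choose 2 • (x ^ n * (y ^ n * x) * y) := by
          rw [pow_succ, ih, smul_mul_assoc]
          simp only [mul_assoc]
      _ = c ^ (n + 1).choose 2 • (x ^ (n + 1) * y ^ (n + 1)) := by
          rw [move_left, mul_smul_comm, smul_mul_assoc, smul_smul, ← pow_add,
            Nat.choose_succ_succ' n 1, Nat.choose_one_right, add_comm n, pow_succ x, pow_succ y]
          simp only [mul_assoc]

theorem semiconjBy_inverse_smul [Semifield R] [Semiring A] [Algebra R A] {a x y : A} {c : R}
    (hc : c ≠ 0) (hxy : x * y = 1) (hyx : y * x = 1) (h : SemiconjBy a x (c • x)) :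
    SemiconjBy a y (c⁻¹ • y) := by
  have conj : y * a = c • (a * y) := by
    calc y * a = y * (a * x) * y := by rw [mul_assoc, mul_assoc, hxy, mul_one]
      _ = c • (a * y) := by
        rw [h.eq, smul_mul_assoc, mul_smul_comm, smul_mul_assoc, ← mul_assoc, hyx, one_mul]
  rw [SemiconjBy, smul_mul_assoc, conj, inv_smul_smul₀ hc]

theorem commute_of_mul_eq_smul_one [CommSemiring R] [Semiring A] [Algebra R A] {x y : A} {c : R}
    (hx : IsUnit x) (h : y * x = c • 1) : Commute y x :=
  hx.mul_right_cancel (by rw [mul_assoc x, h, smul_one_mul, mul_smul_one])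

theorem mul_sum_pow_smul_inverse [CommSemiring R] [Ring A] [Algebra R A] {x y : A} {c : R} {n : ℕ}
    (hxy : x * y = 1) (hcy : (c • y) ^ n = 1) :
    x * ∑ j ∈ range n, (c • y) ^ j = c • ∑ j ∈ range n, (c • y) ^ j := by
  have fixed : (c • y) * ∑ j ∈ range n, (c • y) ^ j = ∑ j ∈ range n, (c • y) ^ j := by
    rw [← sub_eq_zero, ← sub_one_mul, mul_geom_sum, hcy, sub_self]
  calc x * ∑ j ∈ range n, (c • y) ^ j
      = x * ((c • y) * ∑ j ∈ range n, (c • y) ^ j) := by rw [fixed]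
    _ = c • ∑ j ∈ range n, (c • y) ^ j := by
      rw [← mul_assoc, mul_smul_comm, hxy, smul_one_mul]

end QCommutation

theorem sum_range_succ_shift_of_eq {M : Type*} [AddCommGroup M] {f : ℕ → M} {n : ℕ}
    (h : f n = f 0) : ∑ i ∈ range n, f (i + 1) = ∑ i ∈ range n, f i := by
  rw [← sub_eq_zero, ← sum_sub_distrib, sum_range_sub, h, sub_self]

theorem prod_one_sub_mul_pow_succ {R : Type*} [CommRing R] [IsDomain R] {r : R} {n : ℕ}
    (hr : IsPrimitiveRoot r n) (hn : 0 < n) (z : R) :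
    ∏ j ∈ range n, (1 - z * r ^ (j + 1)) = 1 - z ^ n := by
  have factored := congr_arg (Polynomial.eval 1)
    (X_pow_sub_C_eq_prod hr hn (show (z * r) ^ n = z ^ n by rw [mul_pow, hr.pow_eq_one, mul_one]))
  simp only [Polynomial.eval_sub, Polynomial.eval_pow, Polynomial.eval_X, Polynomial.eval_C,
    one_pow, Polynomial.eval_prod] at factored
  rw [factored]
  exact prod_congr rfl fun j _ => by ring

theorem one_sub_mul_pow_ne_zero {R : Type*} [CommRing R] {r z : R} {n : ℕ} (hr : r ^ n = 1)
    (hz : z ^ n ≠ 1) (m : ℕ) : 1 - z * r ^ m ≠ 0 := fun h => hz <| by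
  have root : (z * r ^ m) ^ n = 1 := by rw [← sub_eq_zero.1 h, one_pow]
  rwa [mul_pow, pow_right_comm, hr, one_pow, mul_one] at root

theorem kronecker_pow {R m n : Type*} [CommSemiring R] [Fintype m] [DecidableEq m] [Fintype n]
    [DecidableEq n] (A : Matrix m m R) (B : Matrix n n R) (k : ℕ) :
    (A ⊗ₖ B) ^ k = (A ^ k) ⊗ₖ (B ^ k) := by
  induction k with
  | zero => simp
  | succ k ih => rw [pow_succ, ih, ← Matrix.mul_kronecker_mul, ← pow_succ, ← pow_succ]

theorem kronecker_sum {R ι l m n p : Type*} [CommSemiring R] (A : Matrix l m R)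
    (B : ι → Matrix n p R) (s : Finset ι) : A ⊗ₖ (∑ i ∈ s, B i) = ∑ i ∈ s, A ⊗ₖ B i :=
  map_sum (Matrix.kroneckerBilinear (R := R) A) B s

theorem isUnit_det_of_pow_eq_one {R n : Type*} [CommRing R] [Fintype n] [DecidableEq n]
    {A : Matrix n n R} {k : ℕ} (hk : k ≠ 0) (h : A ^ k = 1) : IsUnit A.det :=
  (Matrix.isUnit_iff_isUnit_det A).1 (IsUnit.of_pow_eq_one h hk)

theorem ne_zero_of_pow_eq_one {M : Type*} [MonoidWithZero M] [Nontrivial M] {x : M} {n : ℕ}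
    (hn : n ≠ 0) (hx : x ^ n = 1) : x ≠ 0 :=
  (IsUnit.of_pow_eq_one hx hn).ne_zero

theorem pow_val_add_one {M : Type*} [Monoid M] {N : ℕ} [NeZero N] {x : M} (hx : x ^ N = 1)
    (k : ZMod N) : x ^ (k + 1).val = x ^ k.val * x := by
  rw [ZMod.val_add, ← pow_eq_pow_mod _ hx, ZMod.val_one_eq_one_mod, pow_add, ← pow_eq_pow_mod _ hx,
    pow_one]

section Dilogarithm

/-- The coefficient of `U ^ i` in `Ψ_w(U)`, for every natural `i`; the defining sum of `Ψ_w` stops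
at `i = N - 1`, but its cyclicity is a statement about the coefficient of index `N`. -/
noncomputable def psiCoeff (q w₀ w₂ : ℂ) (i : ℕ) : ℂ :=
  ∏ j ∈ range i, (-q⁻¹ * w₂) / (1 - w₀⁻¹ * q ^ (2 * (j + 1)))

variable {N : ℕ} {q w₀ w₂ : ℂ}

theorem psiCoeff_zero : psiCoeff q w₀ w₂ 0 = 1 := by simp [psiCoeff]

theorem psiCoeff_succ_mul (hq : q ≠ 0) (hw₀ : w₀ ≠ 0) {i : ℕ}
    (hi : 1 - w₀⁻¹ * q ^ (2 * (i + 1)) ≠ 0) :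
    psiCoeff q w₀ w₂ (i + 1) * (1 - w₀ * (q ^ 2)⁻¹ ^ (i + 1)) =
      w₀ * w₂ * (q ^ 3)⁻¹ * (psiCoeff q w₀ w₂ i * (q ^ 2)⁻¹ ^ i) := by
  have reflect : 1 - w₀ * (q ^ 2)⁻¹ ^ (i + 1) =
      (1 - w₀⁻¹ * q ^ (2 * (i + 1))) * -(w₀ * (q ^ 2)⁻¹ ^ (i + 1)) := by
    rw [inv_pow, ← pow_mul]
    field_simp
    ring
  rw [psiCoeff, prod_range_succ, reflect, ← mul_assoc, mul_assoc (∏ _ ∈ _, _),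
    div_mul_cancel₀ _ hi, psiCoeff]
  ring

theorem psiCoeff_eq_neg_one (hN : Odd N) (hq : IsPrimitiveRoot q N) (hw₂ : w₂ ≠ 0)
    (hshape : w₂ ^ N = 1 - w₀⁻¹ ^ N) : psiCoeff q w₀ w₂ N = -1 := by
  have hq2 : IsPrimitiveRoot (q ^ 2) N := hq.pow_of_coprime 2 (Nat.coprime_two_left.2 hN)
  have numerator : (-q⁻¹ * w₂) ^ N = -w₂ ^ N := by
    rw [mul_pow, hN.neg_pow, inv_pow, hq.pow_eq_one, inv_one, neg_one_mul]
  simp only [psiCoeff, prod_div_distrib, prod_const, card_range, pow_mul]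
  rw [prod_one_sub_mul_pow_succ hq2 hN.pos, ← hshape, numerator, neg_div,
    div_self (pow_ne_zero N hw₂)]

variable {A : Type*} [Ring A] [Algebra ℂ A] {U Y K : A}

theorem Psi_smul_eq_sum (c : ℂ) :
    Psi N q w₀ w₂ (c • U) = ∑ i ∈ range N, (psiCoeff q w₀ w₂ i * c ^ i) • U ^ i := by
  simp only [Psi, psiCoeff, smul_pow, smul_smul]

theorem semiconjBy_Psi {V : A} (h : SemiconjBy K U V) :
    SemiconjBy K (Psi N q w₀ w₂ U) (Psi N q w₀ w₂ V) := by
  simp only [SemiconjBy, Psi, mul_sum, sum_mul, mul_smul_comm, smul_mul_assoc, (h.pow_right _).eq]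

theorem Psi_q_difference (hN : Odd N) (hq : IsPrimitiveRoot q N) (hw₀ : w₀ ≠ 0) (hw₂ : w₂ ≠ 0)
    (hshape : w₂ ^ N = 1 - w₀⁻¹ ^ N) (hU : U ^ N = -1) :
    Psi N q w₀ w₂ U =
      (w₀ • 1 + (w₀ * w₂ * (q ^ 3)⁻¹) • U) * Psi N q w₀ w₂ ((q ^ 2)⁻¹ • U) := by
  set p := (q ^ 2)⁻¹ with hp
  have hw₀N : w₀⁻¹ ^ N ≠ 1 := fun h => pow_ne_zero N hw₂ (by rw [hshape, h, sub_self])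
  have coeff_step (i : ℕ) : psiCoeff q w₀ w₂ (i + 1) * (1 - w₀ * p ^ (i + 1)) =
      w₀ * w₂ * (q ^ 3)⁻¹ * (psiCoeff q w₀ w₂ i * p ^ i) :=
    psiCoeff_succ_mul (hq.ne_zero hN.pos.ne') hw₀ (one_sub_mul_pow_ne_zero hq.pow_eq_one hw₀N _)
  have endpoints : (psiCoeff q w₀ w₂ N * (1 - w₀ * p ^ N)) • U ^ N =
      (psiCoeff q w₀ w₂ 0 * (1 - w₀ * p ^ 0)) • U ^ 0 := by
    have hpN : p ^ N = 1 := by rw [hp, inv_pow, pow_right_comm, hq.pow_eq_one, one_pow, inv_one]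
    rw [psiCoeff_eq_neg_one hN hq hw₂ hshape, psiCoeff_zero, hU, hpN, pow_zero, pow_zero,
      neg_one_mul, neg_smul_neg, one_mul]
  have shifted : Psi N q w₀ w₂ U - w₀ • Psi N q w₀ w₂ (p • U) =
      (w₀ * w₂ * (q ^ 3)⁻¹) • (U * Psi N q w₀ w₂ (p • U)) := by
    calc Psi N q w₀ w₂ U - w₀ • Psi N q w₀ w₂ (p • U)
        = ∑ i ∈ range N, (psiCoeff q w₀ w₂ i * (1 - w₀ * p ^ i)) • U ^ i := by
          rw [Psi_smul_eq_sum, Psi, smul_sum, ← sum_sub_distrib]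
          refine sum_congr rfl fun i _ => ?_
          rw [smul_smul, ← psiCoeff, ← sub_smul, mul_sub, mul_one, mul_left_comm]
      _ = ∑ i ∈ range N, (psiCoeff q w₀ w₂ (i + 1) * (1 - w₀ * p ^ (i + 1))) • U ^ (i + 1) :=
          (sum_range_succ_shift_of_eq endpoints).symm
      _ = (w₀ * w₂ * (q ^ 3)⁻¹) • (U * Psi N q w₀ w₂ (p • U)) := by
          simp only [coeff_step, Psi_smul_eq_sum, mul_sum, smul_sum, mul_smul_comm, smul_smul,
            pow_succ' U]
  rw [add_mul, smul_mul_assoc, smul_mul_assoc, one_mul, ← shifted, add_sub_cancel]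

theorem Psi_intertwining (hN : Odd N) (hq : IsPrimitiveRoot q N) (hw₀ : w₀ ≠ 0) (hw₂ : w₂ ≠ 0)
    (hshape : w₂ ^ N = 1 - w₀⁻¹ ^ N) (hU : U ^ N = -1) (hYU : Y * U = -q • 1)
    (hKU : SemiconjBy K U ((q ^ 2)⁻¹ • U)) :
    Psi N q w₀ w₂ U * (Y * K) =
      (-(w₀ * w₂ * (q ^ 2)⁻¹)) • ((1 - (q ^ 2 * w₂⁻¹) • Y) * K * Psi N q w₀ w₂ U) := by
  have hq0 : q ≠ 0 := hq.ne_zero hN.pos.ne'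
  have U_isUnit : IsUnit U := (isUnit_pow_iff hN.pos.ne').1 (hU ▸ isUnit_one.neg)
  have Y_commutes : Y * Psi N q w₀ w₂ U = Psi N q w₀ w₂ U * Y :=
    (semiconjBy_Psi (commute_of_mul_eq_smul_one U_isUnit hYU)).eq
  have factor : Y * (w₀ • 1 + (w₀ * w₂ * (q ^ 3)⁻¹) • U) =
      (-(w₀ * w₂ * (q ^ 2)⁻¹)) • (1 - (q ^ 2 * w₂⁻¹) • Y) := by
    rw [mul_add, mul_smul_comm, mul_smul_comm, hYU, mul_one]
    match_scalars <;> field_simp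
  have q_difference := Psi_q_difference hN hq hw₀ hw₂ hshape hU
  calc Psi N q w₀ w₂ U * (Y * K) = Y * Psi N q w₀ w₂ U * K := by rw [Y_commutes, mul_assoc]
    _ = Y * (w₀ • 1 + (w₀ * w₂ * (q ^ 3)⁻¹) • U) * (Psi N q w₀ w₂ ((q ^ 2)⁻¹ • U) * K) := by
      rw [q_difference]
      simp only [mul_assoc]
    _ = (-(w₀ * w₂ * (q ^ 2)⁻¹)) • ((1 - (q ^ 2 * w₂⁻¹) • Y) * K * Psi N q w₀ w₂ U) := by
      rw [factor, ← (semiconjBy_Psi hKU).eq, smul_mul_assoc, mul_assoc (1 - _)]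

end Dilogarithm

section Generators

variable {N : ℕ} [NeZero N] {q : ℂ}

theorem semiconjBy_A0_A1 (hq : q ^ N = 1) : SemiconjBy (A0 N q) (A1 N) (q ^ 2 • A1 N) := by
  ext i j
  simp only [A0, A1, Matrix.diagonal_mul, Matrix.mul_diagonal, Matrix.smul_apply, smul_eq_mul]
  split_ifs with h
  · rw [h, mul_comm 2, mul_comm 2, pow_mul, pow_mul, pow_val_add_one hq]
    ring
  · simp

theorem A0_pow_eq_one (hq : q ^ N = 1) : A0 N q ^ N = 1 := by
  rw [A0, Matrix.diagonal_pow, ← Matrix.diagonal_one]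
  congr 1
  ext k
  rw [Pi.pow_apply, pow_right_comm, hq, one_pow]

theorem A1_pow_apply (n : ℕ) (i j : ZMod N) : (A1 N ^ n) i j = if i = j + n then 1 else 0 := by
  induction n generalizing i j with
  | zero => simp [Matrix.one_apply]
  | succ n ih => simp [pow_succ, Matrix.mul_apply, ih, A1, add_left_comm, add_comm]

theorem A1_pow_eq_one : A1 N ^ N = 1 := by
  ext i j
  simp [A1_pow_apply, Matrix.one_apply]

theorem A1_mul_A0_pow_eq_one (hq : q ^ N = 1) : (A1 N * A0 N q) ^ N = 1 := by
  have scalar : (q ^ 2) ^ N.choose 2 = 1 := by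
    rw [← pow_mul, Nat.choose_two_right, Nat.mul_div_cancel' (Nat.even_mul_pred_self N).two_dvd,
      pow_mul, hq, one_pow]
  rw [mul_pow_of_semiconjBy_smul (semiconjBy_A0_A1 hq), A1_pow_eq_one, A0_pow_eq_one hq, scalar,
    one_smul, one_mul]

theorem A0_mul_A1_pow_eq_one (hq : q ^ N = 1) : (A0 N q * A1 N) ^ N = 1 := by
  rw [(semiconjBy_A0_A1 hq).eq, smul_mul_assoc, smul_pow, A1_mul_A0_pow_eq_one hq,
    pow_right_comm, hq, one_pow, one_smul]

theorem isUnit_det_A1 : IsUnit (A1 N).det :=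
  isUnit_det_of_pow_eq_one (NeZero.ne N) A1_pow_eq_one

theorem isUnit_det_A0_mul_A1 (hq : q ^ N = 1) : IsUnit (A0 N q * A1 N).det :=
  isUnit_det_of_pow_eq_one (NeZero.ne N) (A0_mul_A1_pow_eq_one hq)

theorem A2_mul_A0_mul_A1 (hq : q ≠ 0) : A2 N q * (A0 N q * A1 N) = q • 1 := by
  ext i j
  rw [← mul_assoc, Matrix.mul_apply]
  simp only [A0, A1, A2, Matrix.mul_diagonal, mul_ite, mul_one, mul_zero, sum_ite_eq', mem_univ,
    if_true, add_sub_cancel_right, Matrix.smul_apply, Matrix.one_apply, smul_eq_mul, ite_mul,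
    zero_mul]
  split_ifs
  · rw [← zpow_natCast, ← zpow_add₀ hq]
    simp
  · rfl

theorem A2_eq_smul_inv (hq : q ^ N = 1) : A2 N q = q • (A0 N q * A1 N)⁻¹ := by
  have hq0 : q ≠ 0 := ne_zero_of_pow_eq_one (NeZero.ne N) hq
  rw [← smul_one_mul, ← A2_mul_A0_mul_A1 hq0, Matrix.mul_nonsing_inv_cancel_right _ _
    (isUnit_det_A0_mul_A1 hq)]

theorem semiconjBy_A0_A1_inv (hq : q ^ N = 1) :
    SemiconjBy (A0 N q) (A1 N)⁻¹ ((q ^ 2)⁻¹ • (A1 N)⁻¹) :=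
  have hq0 : q ≠ 0 := ne_zero_of_pow_eq_one (NeZero.ne N) hq
  semiconjBy_inverse_smul (pow_ne_zero 2 hq0) (Matrix.mul_nonsing_inv _ isUnit_det_A1)
    (Matrix.nonsing_inv_mul _ isUnit_det_A1) (semiconjBy_A0_A1 hq)

theorem semiconjBy_A0_A2 (hq : q ^ N = 1) :
    SemiconjBy (A0 N q) (A2 N q) ((q ^ 2)⁻¹ • A2 N q) := by
  have hq0 : q ≠ 0 := ne_zero_of_pow_eq_one (NeZero.ne N) hq
  have hA0A1 : SemiconjBy (A0 N q) (A0 N q * A1 N) (q ^ 2 • (A0 N q * A1 N)) := by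
    rw [← mul_smul_comm]
    exact (Commute.refl (A0 N q)).semiconjBy.mul_right (semiconjBy_A0_A1 hq)
  rw [A2_eq_smul_inv hq, smul_comm]
  exact (semiconjBy_inverse_smul (pow_ne_zero 2 hq0)
    (Matrix.mul_nonsing_inv _ (isUnit_det_A0_mul_A1 hq))
    (Matrix.nonsing_inv_mul _ (isUnit_det_A0_mul_A1 hq)) hA0A1).smul_right q

end Generators

section Intertwining

variable {N : ℕ} [NeZero N] {q : ℂ}

theorem Ups_eq_sum_kronecker_sum :
    Ups N q = (N : ℂ)⁻¹ • ∑ i ∈ range N,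
      (A0 N q ^ i) ⊗ₖ ∑ j ∈ range N, (q ^ (-(2 * (i : ℤ) + 1)) • (A1 N * A0 N q)⁻¹) ^ j := by
  refine congr_arg _ (sum_congr rfl fun i _ => ?_)
  rw [kronecker_sum]
  refine sum_congr rfl fun j _ => ?_
  rw [smul_pow, Matrix.kronecker_smul, ← zpow_natCast (q ^ _) j, ← zpow_mul]
  ring_nf

theorem A1_mul_A0_mul_sum_pow (hq : q ^ N = 1) (m : ℤ) :
    (A1 N * A0 N q) * ∑ j ∈ range N, (q ^ m • (A1 N * A0 N q)⁻¹) ^ j =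
      q ^ m • ∑ j ∈ range N, (q ^ m • (A1 N * A0 N q)⁻¹) ^ j := by
  have hdet := isUnit_det_of_pow_eq_one (NeZero.ne N) (A1_mul_A0_pow_eq_one hq)
  refine mul_sum_pow_smul_inverse (Matrix.mul_nonsing_inv _ hdet) ?_
  rw [smul_pow, Matrix.inv_pow', A1_mul_A0_pow_eq_one hq, inv_one, ← zpow_natCast, zpow_comm,
    zpow_natCast, hq, one_zpow, one_smul]

theorem Ups_mul_A2_kronecker_one (hq : q ^ N = 1) :
    Ups N q * (A2 N q ⊗ₖ (1 : Matrix (ZMod N) (ZMod N) ℂ)) =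
      q • ((A2 N q ⊗ₖ (A1 N * A0 N q)) * Ups N q) := by
  have hq0 : q ≠ 0 := ne_zero_of_pow_eq_one (NeZero.ne N) hq
  rw [Ups_eq_sum_kronecker_sum, smul_mul_assoc, mul_smul_comm, smul_comm q]
  simp only [sum_mul, mul_sum, smul_sum]
  congr! 2 with i -
  have scalar : q * q ^ (-(2 * (i : ℤ) + 1)) = (q ^ 2)⁻¹ ^ i := by
    rw [← zpow_one_add₀ hq0, ← inv_pow, ← pow_mul, ← zpow_natCast, inv_zpow']
    push_cast
    ring_nf
  rw [← Matrix.mul_kronecker_mul, ← Matrix.mul_kronecker_mul, mul_one, A1_mul_A0_mul_sum_pow hq,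
    (semiconjBy_pow_left_smul (semiconjBy_A0_A2 hq) i).eq, smul_mul_assoc, Matrix.smul_kronecker,
    Matrix.kronecker_smul, smul_smul, scalar]

/-- The operator `-A₀A₁ ⊗ A₁⁻¹` at which `Ψ_w` is evaluated in `ℒ`. -/
noncomputable def dilogArg (N : ℕ) [NeZero N] (q : ℂ) :
    Matrix (ZMod N × ZMod N) (ZMod N × ZMod N) ℂ :=
  -((A0 N q * A1 N) ⊗ₖ (A1 N)⁻¹)

theorem dilogArg_pow (hN : Odd N) (hq : q ^ N = 1) : dilogArg N q ^ N = -1 := by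
  rw [dilogArg, hN.neg_pow, kronecker_pow, A0_mul_A1_pow_eq_one hq, Matrix.inv_pow',
    A1_pow_eq_one, inv_one, Matrix.one_kronecker_one]

theorem A2_kronecker_A1_mul_dilogArg (hq : q ≠ 0) :
    (A2 N q ⊗ₖ A1 N) * dilogArg N q = -q • 1 := by
  rw [dilogArg, mul_neg, ← Matrix.mul_kronecker_mul, A2_mul_A0_mul_A1 hq,
    Matrix.mul_nonsing_inv _ isUnit_det_A1, Matrix.smul_kronecker, Matrix.one_kronecker_one,
    neg_smul]

theorem semiconjBy_one_kronecker_A0_dilogArg (hq : q ^ N = 1) :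
    SemiconjBy ((1 : Matrix (ZMod N) (ZMod N) ℂ) ⊗ₖ A0 N q) (dilogArg N q)
      ((q ^ 2)⁻¹ • dilogArg N q) := by
  rw [SemiconjBy, dilogArg, mul_neg, smul_neg, neg_mul, smul_mul_assoc, ← Matrix.mul_kronecker_mul,
    ← Matrix.mul_kronecker_mul, (semiconjBy_A0_A1_inv hq).eq, smul_mul_assoc, Matrix.kronecker_smul,
    one_mul, mul_one]

end Intertwining

/-- The intertwining relation for the generator `X₄`:
`ℒ ∘ (A₂ ⊗ I) = (I⊗I − q²w₂⁻¹(A₂ ⊗ A₁)) ∘ (I ⊗ w₁⁻¹A₀) ∘ ℒ` for a triple of quantum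
shape parameters `(w₀, w₁, w₂)`. -/
theorem Ldil_X4_relation (N : ℕ) [NeZero N] (hN : 3 ≤ N) (hNodd : Odd N)
    (q : ℂ) (hq : IsPrimitiveRoot q N)
    (w₀ w₁ w₂ : ℂ) (hw₀ : w₀ ≠ 0) (hw₁ : w₁ ≠ 0) (hw₂ : w₂ ≠ 0)
    (htetra : w₀ * w₁ * w₂ = -q) (hshape : w₂ ^ N = 1 - (w₀⁻¹) ^ N) :
    Ldil N q w₀ w₂ * (A2 N q ⊗ₖ (1 : Matrix (ZMod N) (ZMod N) ℂ)) =
      (1 - (q ^ 2 * w₂⁻¹) • (A2 N q ⊗ₖ A1 N)) *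
        (w₁⁻¹ • ((1 : Matrix (ZMod N) (ZMod N) ℂ) ⊗ₖ A0 N q)) * Ldil N q w₀ w₂ := by
  have hqN : q ^ N = 1 := hq.pow_eq_one
  have hq0 : q ≠ 0 := hq.ne_zero (NeZero.ne N)
  have hw₁_inv : q * -(w₀ * w₂ * (q ^ 2)⁻¹) = w₁⁻¹ := by
    field_simp
    linear_combination -htetra
  have hΨ := Psi_intertwining hNodd hq hw₀ hw₂ hshape (dilogArg_pow hNodd hqN)
    (A2_kronecker_A1_mul_dilogArg hq0) (semiconjBy_one_kronecker_A0_dilogArg hqN)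
  have hYK : A2 N q ⊗ₖ (A1 N * A0 N q) = (A2 N q ⊗ₖ A1 N) * (1 ⊗ₖ A0 N q) := by
    rw [← Matrix.mul_kronecker_mul, mul_one]
  have hL : Ldil N q w₀ w₂ = Psi N q w₀ w₂ (dilogArg N q) * Ups N q := rfl
  rw [hL, mul_assoc, Ups_mul_A2_kronecker_one hqN, hYK, mul_smul_comm, ← mul_assoc (Psi ..), hΨ,
    smul_mul_assoc, smul_smul, hw₁_inv, mul_smul_comm, smul_mul_assoc]
  simp only [mul_assoc]
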